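/- Let n ≥ 1 and let Q and Q′ be real normal defining functions of dimension n, with M of class 𝒞 at 0, and let ℋ = (f,g,f̃,g̃) be an HSPM sending (ℳ,0) into (ℳ′,0). If g does not vanish identically near 0, then χ ↦ det(∂f̃/∂χ(χ,0)) does not vanish identically near 0. Likewise, if g̃ does not vanish identically near 0, then z ↦ det(∂f/∂z(z,0)) does not vanish identically near 0. -/

import Mathlib

open Filter Topology Complex

namespace HSPMpaper

variable {n : ℕ}

/-- Partial derivative of `F` in the `i`-th coordinate direction. -/
noncomputable def pd (i : Fin n) (F : (Fin n → ℂ) → ℂ) : (Fin n → ℂ) → ℂ :=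
  fun z => fderiv ℂ F z (Pi.single i 1)

/-- Iterated partial derivative `∂^α` for a multi-index `α`. -/
noncomputable def mpd (α : Fin n → ℕ) (F : (Fin n → ℂ) → ℂ) : (Fin n → ℂ) → ℂ :=
  ((List.ofFn fun i : Fin n => (pd i)^[α i]).foldr (· ∘ ·) id) F

/-- Componentwise complex conjugation on `ℂⁿ`. -/
def conjV (z : Fin n → ℂ) : Fin n → ℂ := fun i => starRingEnd ℂ (z i)

/-- The conjugate defining function `Q̄(χ,z,τ) = conj (Q (conj χ) (conj z) (conj τ))`. -/
def QBar (Q : (Fin n → ℂ) → (Fin n → ℂ) → ℂ → ℂ) : (Fin n → ℂ) → (Fin n → ℂ) → ℂ → ℂ :=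
  fun χ z τ => starRingEnd ℂ (Q (conjV χ) (conjV z) (starRingEnd ℂ τ))

/-- `Q` is a normal defining function (of dimension `n`): holomorphic near the origin of
`ℂⁿ × ℂⁿ × ℂ` and satisfying `Q(0,χ,τ) = τ` and `Q(z,0,τ) = τ` near `0`. -/
def IsNormalDF (Q : (Fin n → ℂ) → (Fin n → ℂ) → ℂ → ℂ) : Prop :=
  (∀ᶠ p in 𝓝 (0 : (Fin n → ℂ) × (Fin n → ℂ) × ℂ),
      AnalyticAt ℂ (fun q : (Fin n → ℂ) × (Fin n → ℂ) × ℂ => Q q.1 q.2.1 q.2.2) p) ∧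
  (∀ᶠ p in 𝓝 (0 : (Fin n → ℂ) × (Fin n → ℂ) × ℂ),
      Q 0 p.2.1 p.2.2 = p.2.2 ∧ Q p.1 0 p.2.2 = p.2.2)

/-- `Q` is a real normal defining function: normal and `Q(z,χ,Q̄(χ,z,w)) = w` near `0`. -/
def IsRealNormalDF (Q : (Fin n → ℂ) → (Fin n → ℂ) → ℂ → ℂ) : Prop :=
  IsNormalDF Q ∧
  ∀ᶠ p in 𝓝 (0 : (Fin n → ℂ) × (Fin n → ℂ) × ℂ),
    Q p.1 p.2.1 (QBar Q p.2.1 p.1 p.2.2) = p.2.2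

/-- `(f,g,f̃,g̃)` is a holomorphic Segre preserving map sending `(ℳ,0)` into `(ℳ',0)`. -/
def IsHSPM (Q Q' : (Fin n → ℂ) → (Fin n → ℂ) → ℂ → ℂ)
    (f : (Fin n → ℂ) → ℂ → Fin n → ℂ) (g : (Fin n → ℂ) → ℂ → ℂ)
    (ft : (Fin n → ℂ) → ℂ → Fin n → ℂ) (gt : (Fin n → ℂ) → ℂ → ℂ) : Prop :=
  (∀ᶠ p in 𝓝 (0 : (Fin n → ℂ) × ℂ), AnalyticAt ℂ (fun q : (Fin n → ℂ) × ℂ => f q.1 q.2) p) ∧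
  (∀ᶠ p in 𝓝 (0 : (Fin n → ℂ) × ℂ), AnalyticAt ℂ (fun q : (Fin n → ℂ) × ℂ => g q.1 q.2) p) ∧
  (∀ᶠ p in 𝓝 (0 : (Fin n → ℂ) × ℂ), AnalyticAt ℂ (fun q : (Fin n → ℂ) × ℂ => ft q.1 q.2) p) ∧
  (∀ᶠ p in 𝓝 (0 : (Fin n → ℂ) × ℂ), AnalyticAt ℂ (fun q : (Fin n → ℂ) × ℂ => gt q.1 q.2) p) ∧
  f 0 0 = 0 ∧ g 0 0 = 0 ∧ ft 0 0 = 0 ∧ gt 0 0 = 0 ∧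
  ∀ᶠ p in 𝓝 (0 : (Fin n → ℂ) × (Fin n → ℂ) × ℂ),
    g p.1 (Q p.1 p.2.1 p.2.2) =
      Q' (f p.1 (Q p.1 p.2.1 p.2.2)) (ft p.2.1 p.2.2) (gt p.2.1 p.2.2)

/-- `M` is of finite type at `0`: `(z,χ) ↦ Q(z,χ,0)` does not vanish identically near `0`. -/
def FiniteType (Q : (Fin n → ℂ) → (Fin n → ℂ) → ℂ → ℂ) : Prop :=
  ¬ ∀ᶠ p in 𝓝 (0 : (Fin n → ℂ) × (Fin n → ℂ)), Q p.1 p.2 0 = 0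

/-- Jacobian matrix of `z ↦ f(z,0)` at `z`. -/
noncomputable def jacz (f : (Fin n → ℂ) → ℂ → Fin n → ℂ) (z : Fin n → ℂ) :
    Matrix (Fin n) (Fin n) ℂ :=
  Matrix.of fun i j => pd j (fun z' => f z' 0 i) z

/-- `ℋ` is Segre transversal to `ℳ'` at `0`: `∂g/∂w(0,0) ≠ 0`. -/
noncomputable def SegreTransversal (g : (Fin n → ℂ) → ℂ → ℂ) : Prop :=
  deriv (fun w => g 0 w) 0 ≠ 0

/-- `ℋ` is totally Segre nondegenerate at `0`. -/
def TotallySegreNondeg (f ft : (Fin n → ℂ) → ℂ → Fin n → ℂ) : Prop :=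
  (¬ ∀ᶠ z in 𝓝 (0 : Fin n → ℂ), (jacz f z).det = 0) ∧
  (¬ ∀ᶠ χ in 𝓝 (0 : Fin n → ℂ), (jacz ft χ).det = 0)

/-- `ℋ` is transversally null: `g ≡ 0` and `g̃ ≡ 0` near `0`. -/
def TransversallyNull (g gt : (Fin n → ℂ) → ℂ → ℂ) : Prop :=
  (∀ᶠ p in 𝓝 (0 : (Fin n → ℂ) × ℂ), g p.1 p.2 = 0) ∧
  (∀ᶠ p in 𝓝 (0 : (Fin n → ℂ) × ℂ), gt p.1 p.2 = 0)

/-- The `k`-th coordinate direction in `ℂⁿ × ℂ`. -/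
noncomputable def dirCT (n : ℕ) (k : Fin (n + 1)) : (Fin n → ℂ) × ℂ :=
  if h : (k : ℕ) < n then (Pi.single ⟨k, h⟩ 1, 0) else (0, 1)

/-- `M` is holomorphically nondegenerate at `0`: for some `K`, the map
`(χ,τ) ↦ (∂_z^α Q(0,χ,τ))_{|α| ≤ K}` has generic rank `n+1`. -/
def HolNondeg (Q : (Fin n → ℂ) → (Fin n → ℂ) → ℂ → ℂ) : Prop :=
  ∃ K : ℕ, ∃ A : Fin (n + 1) → Fin n → ℕ, (∀ j, (∑ i, A j i) ≤ K) ∧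
    ¬ ∀ᶠ p in 𝓝 (0 : (Fin n → ℂ) × ℂ),
      (Matrix.of fun j k : Fin (n + 1) =>
        fderiv ℂ (fun q : (Fin n → ℂ) × ℂ => mpd (A j) (fun z => Q z q.1 q.2) 0) p
          (dirCT n k)).det = 0

/-- `M` is of class `𝒞` at `0`: for some `K`, the map
`χ ↦ (∂_z^α Q(0,χ,0))_{|α| ≤ K}` has generic rank `n`. -/
def ClassC (Q : (Fin n → ℂ) → (Fin n → ℂ) → ℂ → ℂ) : Prop :=
  ∃ K : ℕ, ∃ A : Fin n → Fin n → ℕ, (∀ j, (∑ i, A j i) ≤ K) ∧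
    ¬ ∀ᶠ χ in 𝓝 (0 : Fin n → ℂ),
      (Matrix.of fun j k : Fin n =>
        pd k (fun χ' => mpd (A j) (fun z => Q z χ' 0) 0) χ).det = 0

/-- `M` is finitely nondegenerate at `0`: for some `K`, the vectors
`∂_χ ∂_z^α Q(0,0,0)`, `|α| ≤ K`, span `ℂⁿ`. -/
def FinNondeg (Q : (Fin n → ℂ) → (Fin n → ℂ) → ℂ → ℂ) : Prop :=
  ∃ K : ℕ, Submodule.span ℂ
    {v : Fin n → ℂ | ∃ α : Fin n → ℕ, (∑ i, α i) ≤ K ∧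
      v = fun i => pd i (fun χ => mpd α (fun z => Q z χ 0) 0) 0} = ⊤

/-- Full Jacobian matrix of `(z,w) ↦ (f(z,w), g(z,w))` at `p ∈ ℂⁿ × ℂ`. -/
noncomputable def jacFull (f : (Fin n → ℂ) → ℂ → Fin n → ℂ) (g : (Fin n → ℂ) → ℂ → ℂ)
    (p : (Fin n → ℂ) × ℂ) : Matrix (Fin (n + 1)) (Fin (n + 1)) ℂ :=
  Matrix.of fun i k =>
    fderiv ℂ (fun q : (Fin n → ℂ) × ℂ => (Fin.snoc (f q.1 q.2) (g q.1 q.2) : Fin (n + 1) → ℂ) i) p (dirCT n k)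

/-- The degree-`d` homogeneous term of the Taylor series of `φ` at `0`. -/
noncomputable def homogTerm (d : ℕ) (φ : (Fin n → ℂ) → ℂ) : (Fin n → ℂ) → ℂ :=
  fun z => iteratedFDeriv ℂ d φ 0 (fun _ => z) / (d.factorial : ℂ)

/-- The order of vanishing of `φ` at `0`. -/
noncomputable def vanishOrder (φ : (Fin n → ℂ) → ℂ) : ℕ :=
  sInf {d | homogTerm d φ ≠ 0}


/-- An operator `D` on functions of `z` that respects holomorphic dependence on a parameter `χ`:
it preserves analyticity, and the vanishing of a derivative in the parameter. -/
def RespectsParameters (D : ((Fin n → ℂ) → ℂ) → ((Fin n → ℂ) → ℂ)) : Prop :=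
  ∀ (O : Set ((Fin n → ℂ) × (Fin n → ℂ))), IsOpen O →
    ∀ X : (Fin n → ℂ) → (Fin n → ℂ) → ℂ,
      AnalyticOnNhd ℂ (fun p : (Fin n → ℂ) × (Fin n → ℂ) => X p.1 p.2) O →
      AnalyticOnNhd ℂ
        (fun p : (Fin n → ℂ) × (Fin n → ℂ) => D (fun z => X z p.2) p.1) O ∧
      ∀ χ v : Fin n → ℂ,
        (∀ z, (z, χ) ∈ O →
          fderiv ℂ (fun p : (Fin n → ℂ) × (Fin n → ℂ) => X p.1 p.2) (z, χ) (0, v) = 0) →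
        ∀ z, (z, χ) ∈ O →
          fderiv ℂ (fun p : (Fin n → ℂ) × (Fin n → ℂ) => D (fun z => X z p.2) p.1) (z, χ)
            (0, v) = 0

lemma RespectsParameters.id : RespectsParameters (n := n) id :=
  fun _ _ _ hX => ⟨hX, fun _ _ h => h⟩

lemma RespectsParameters.comp {D E : ((Fin n → ℂ) → ℂ) → ((Fin n → ℂ) → ℂ)}
    (hD : RespectsParameters D) (hE : RespectsParameters E) : RespectsParameters (D ∘ E) := by
  intro O hO X hX
  obtain ⟨h1, h2⟩ := hE O hO X hX
  obtain ⟨h3, h4⟩ := hD O hO (fun z χ => E (fun z' => X z' χ) z) h1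
  exact ⟨h3, fun χ v h => h4 χ v (h2 χ v h)⟩

lemma fderiv_slice_left {X : (Fin n → ℂ) × (Fin n → ℂ) → ℂ} {z χ : Fin n → ℂ}
    (h : DifferentiableAt ℂ X (z, χ)) (v : Fin n → ℂ) :
    fderiv ℂ (fun z' => X (z', χ)) z v = fderiv ℂ X (z, χ) (v, 0) := by
  have h1 : HasFDerivAt (fun z' : Fin n → ℂ => (z', χ))
      (ContinuousLinearMap.inl ℂ (Fin n → ℂ) (Fin n → ℂ)) z := hasFDerivAt_prodMk_left z χ
  have h2 := HasFDerivAt.comp z (f := fun z' : Fin n → ℂ => (z', χ)) h.hasFDerivAt h1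
  have h3 : fderiv ℂ (fun z' => X (z', χ)) z = _ := h2.fderiv
  rw [h3]
  simp

lemma fderiv_slice_right {X : (Fin n → ℂ) × (Fin n → ℂ) → ℂ} {z χ : Fin n → ℂ}
    (h : DifferentiableAt ℂ X (z, χ)) (v : Fin n → ℂ) :
    fderiv ℂ (fun χ' => X (z, χ')) χ v = fderiv ℂ X (z, χ) (0, v) := by
  have h1 : HasFDerivAt (fun χ' : Fin n → ℂ => (z, χ'))
      (ContinuousLinearMap.inr ℂ (Fin n → ℂ) (Fin n → ℂ)) χ := hasFDerivAt_prodMk_right z χ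
  have h2 := HasFDerivAt.comp χ (f := fun χ' : Fin n → ℂ => (z, χ')) h.hasFDerivAt h1
  have h3 : fderiv ℂ (fun χ' => X (z, χ')) χ = _ := h2.fderiv
  rw [h3]
  simp

lemma fderiv_fderiv_apply_comm {E : Type*} [NormedAddCommGroup E] [NormedSpace ℂ E]
    {X : E → ℂ} {p : E} (h : AnalyticAt ℂ X p) (u v : E) :
    fderiv ℂ (fun x => fderiv ℂ X x u) p v = fderiv ℂ (fun x => fderiv ℂ X x v) p u := by
  have hd : DifferentiableAt ℂ (fderiv ℂ X) p := h.fderiv.differentiableAt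
  have hs : IsSymmSndFDerivAt ℂ X p := h.contDiffAt.isSymmSndFDerivAt_of_omega
  rw [fderiv_clm_apply hd (differentiableAt_const u),
    fderiv_clm_apply hd (differentiableAt_const v)]
  simpa using hs v u

lemma _root_.AnalyticAt.apply_vector {E F G : Type*} [NormedAddCommGroup E] [NormedSpace ℂ E]
    [NormedAddCommGroup F] [NormedSpace ℂ F] [NormedAddCommGroup G] [NormedSpace ℂ G]
    {L : E → F →L[ℂ] G} {p : E} (hL : AnalyticAt ℂ L p) (u : F) :
    AnalyticAt ℂ (fun x => L x u) p :=
  ((ContinuousLinearMap.apply ℂ G u).analyticAt _).comp hL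

lemma RespectsParameters.pd (i : Fin n) : RespectsParameters (pd i) := by
  intro O hO X hX
  have key : ∀ p ∈ O, HSPMpaper.pd i (fun z => X z p.2) p.1 =
      fderiv ℂ (fun p : (Fin n → ℂ) × (Fin n → ℂ) => X p.1 p.2) p (Pi.single i 1, 0) :=
    fun p hp => fderiv_slice_left (X := fun p => X p.1 p.2) (z := p.1) (χ := p.2)
      (hX p hp).differentiableAt _
  have key' : ∀ p ∈ O, (fun p : (Fin n → ℂ) × (Fin n → ℂ) =>
      HSPMpaper.pd i (fun z => X z p.2) p.1) =ᶠ[𝓝 p]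
      fun p => fderiv ℂ (fun p : (Fin n → ℂ) × (Fin n → ℂ) => X p.1 p.2) p (Pi.single i 1, 0) :=
    fun p hp => by
      filter_upwards [hO.mem_nhds hp] with x hx using key x hx
  have han : ∀ u, AnalyticOnNhd ℂ
      (fun p => fderiv ℂ (fun p : (Fin n → ℂ) × (Fin n → ℂ) => X p.1 p.2) p u) O :=
    fun u p hp => (hX p hp).fderiv.apply_vector u
  refine ⟨fun p hp => (han _ p hp).congr (key' p hp).symm, fun χ v h z hz => ?_⟩
  rw [(key' _ hz).fderiv_eq, fderiv_fderiv_apply_comm (hX _ hz),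
    ← fderiv_slice_left (han _ _ hz).differentiableAt]
  have : (fun z' => fderiv ℂ (fun p : (Fin n → ℂ) × (Fin n → ℂ) => X p.1 p.2) (z', χ) (0, v))
      =ᶠ[𝓝 z] fun _ => 0 := by
    have hc : ContinuousAt (fun z' : Fin n → ℂ => (z', χ)) z := by fun_prop
    filter_upwards [hc.preimage_mem_nhds (hO.mem_nhds hz)] with z' hz' using h z' hz'
  rw [this.fderiv_eq]
  simp

/-- A property of operators that is stable under composition and holds for the `pd i` holds for
the iterated partial derivatives. -/
lemma mpd_induction {p : (((Fin n → ℂ) → ℂ) → ((Fin n → ℂ) → ℂ)) → Prop} (hid : p id)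
    (hcomp : ∀ D E, p D → p E → p (D ∘ E)) (hpd : ∀ i, p (pd i)) (α : Fin n → ℕ) :
    p (mpd α) := by
  have hit : ∀ i k, p ((pd i)^[k]) := by
    intro i k
    induction k with
    | zero => exact hid
    | succ k ih => exact hcomp _ _ ih (hpd i)
  have hfold : ∀ L : List (((Fin n → ℂ) → ℂ) → ((Fin n → ℂ) → ℂ)), (∀ D ∈ L, p D) →
      p (L.foldr (· ∘ ·) id) := by
    intro L
    induction L with
    | nil => exact fun _ => hid
    | cons D L ih =>
      intro h
      exact hcomp D (L.foldr (· ∘ ·) id) (h D (by simp)) (ih fun E hE => h E (by simp [hE]))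
  exact hfold _ fun D hD => by
    obtain ⟨i, rfl⟩ := List.mem_ofFn.1 hD
    exact hit _ _

lemma RespectsParameters.mpd (α : Fin n → ℕ) : RespectsParameters (mpd α) :=
  mpd_induction RespectsParameters.id (fun _ _ => RespectsParameters.comp)
    RespectsParameters.pd α

/-- On a connected open set, the product of two nonzero analytic functions is nonzero. -/
lemma eqOn_zero_or_eqOn_zero_of_mul_eq_zero {E : Type*} [NormedAddCommGroup E] [NormedSpace ℂ E]
    {U : Set E} (hU : IsOpen U) (hc : IsPreconnected U) {a b : E → ℂ}
    (ha : AnalyticOnNhd ℂ a U) (hb : AnalyticOnNhd ℂ b U) (hab : ∀ z ∈ U, a z * b z = 0) :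
    (∀ z ∈ U, a z = 0) ∨ ∀ z ∈ U, b z = 0 := by
  by_contra! h
  obtain ⟨⟨z, hz, hza⟩, w, hw, hwb⟩ := h
  refine hwb (hb.eqOn_zero_of_preconnected_of_eventuallyEq_zero hc hz ?_ hw)
  filter_upwards [(ha z hz).continuousAt.eventually_ne hza, hU.mem_nhds hz] with x hx hxU
  exact (mul_eq_zero.1 (hab x hxU)).resolve_left hx

lemma clm_apply_eq_sum_single {n : ℕ} {F : Type*} [AddCommGroup F] [Module ℂ F]
    [TopologicalSpace F] (L : (Fin n → ℂ) →L[ℂ] F) (v : Fin n → ℂ) :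
    L v = ∑ k, v k • L (Pi.single k 1) := by
  conv_lhs => rw [pi_eq_sum_univ' v]
  simp [map_sum]

/-- If `P(z, q(z,χ), φ(χ))` vanishes identically, `q` has generic rank `n` in the sense of class
`𝒞`, and `φ` is degenerate, then `∂P/∂w` vanishes identically along the same map. -/
lemma fderiv_eq_zero_along_of_degenerate {P : (Fin n → ℂ) × ℂ × (Fin n → ℂ) → ℂ}
    {q : (Fin n → ℂ) → (Fin n → ℂ) → ℂ} {φ : (Fin n → ℂ) → (Fin n → ℂ)}
    (hP : AnalyticAt ℂ P 0)
    (hq : AnalyticAt ℂ (fun p : (Fin n → ℂ) × (Fin n → ℂ) => q p.1 p.2) 0)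
    (hφ : AnalyticAt ℂ φ 0) (hq0 : q 0 0 = 0) (hφ0 : φ 0 = 0) (A : Fin n → Fin n → ℕ)
    (hA : ¬ ∀ᶠ χ in 𝓝 (0 : Fin n → ℂ),
      (Matrix.of fun j k : Fin n =>
        pd k (fun χ' => mpd (A j) (fun z => q z χ') 0) χ).det = 0)
    (hdet : ∀ᶠ χ in 𝓝 (0 : Fin n → ℂ),
      (Matrix.of fun i j : Fin n => pd j (fun χ' => φ χ' i) χ).det = 0)
    (h0 : ∀ᶠ p in 𝓝 (0 : (Fin n → ℂ) × (Fin n → ℂ)), P (p.1, q p.1 p.2, φ p.2) = 0) :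
    ∀ᶠ p in 𝓝 (0 : (Fin n → ℂ) × (Fin n → ℂ)),
      fderiv ℂ P (p.1, q p.1 p.2, φ p.2) (0, 1, 0) = 0 := by
  set G : (Fin n → ℂ) × (Fin n → ℂ) → (Fin n → ℂ) × ℂ × (Fin n → ℂ) :=
    fun p => (p.1, q p.1 p.2, φ p.2) with hGdef
  have hG0 : G 0 = 0 := by simp [hGdef, hq0, hφ0]
  have hφ' : AnalyticAt ℂ (fun p : (Fin n → ℂ) × (Fin n → ℂ) => φ p.2) 0 :=
    AnalyticAt.comp (f := fun p : (Fin n → ℂ) × (Fin n → ℂ) => p.2) (by simpa using hφ)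
      analyticAt_snd
  have hG : AnalyticAt ℂ G 0 := analyticAt_fst.prod (hq.prod hφ')
  have hsnd : Tendsto (fun p : (Fin n → ℂ) × (Fin n → ℂ) => p.2) (𝓝 0) (𝓝 0) :=
    continuous_snd.tendsto' _ _ rfl
  have hGt : Tendsto G (𝓝 0) (𝓝 0) := by simpa [hG0] using hG.continuousAt.tendsto
  obtain ⟨r, hr, hball⟩ := Metric.eventually_nhds_iff_ball.1
    ((hq.eventually_analyticAt.and (hsnd.eventually hφ.eventually_analyticAt)).and
      ((hGt.eventually hP.eventually_analyticAt).and
        (h0.and ((hsnd.eventually hdet).and hG.eventually_analyticAt))))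
  set U : Set (Fin n → ℂ) := Metric.ball 0 r with hU
  have hUO : ∀ z ∈ U, ∀ χ ∈ U, (z, χ) ∈ Metric.ball (0 : (Fin n → ℂ) × (Fin n → ℂ)) r := by
    intro z hz χ hχ
    have : ((z, χ) : (Fin n → ℂ) × (Fin n → ℂ)) ∈ U ×ˢ U := ⟨hz, hχ⟩
    rwa [hU, ball_prod_same] at this
  have hOU : ∀ p ∈ Metric.ball (0 : (Fin n → ℂ) × (Fin n → ℂ)) r, p.1 ∈ U ∧ p.2 ∈ U := by
    intro p hp
    have hp' : p ∈ Metric.ball ((0 : Fin n → ℂ), (0 : Fin n → ℂ)) r := hp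
    rw [← ball_prod_same] at hp'
    exact hp'
  set O : Set ((Fin n → ℂ) × (Fin n → ℂ)) := Metric.ball 0 r with hO
  have hOo : IsOpen O := Metric.isOpen_ball
  have hqO : AnalyticOnNhd ℂ (fun p : (Fin n → ℂ) × (Fin n → ℂ) => q p.1 p.2) O :=
    fun p hp => (hball p hp).1.1
  have hY : ∀ j, AnalyticOnNhd ℂ (fun p : (Fin n → ℂ) × (Fin n → ℂ) =>
      mpd (A j) (fun z => q z p.2) p.1) O :=
    fun j => (RespectsParameters.mpd (A j) O hOo q hqO).1
  have hzero : (0 : Fin n → ℂ) ∈ U := Metric.mem_ball_self hr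
  set F : (Fin n → ℂ) × (Fin n → ℂ) → ℂ := fun p => fderiv ℂ P (G p) (0, 1, 0) with hF
  have hFa : AnalyticOnNhd ℂ F O := fun p hp =>
    AnalyticAt.apply_vector ((hball p hp).2.1.fderiv.comp (hball p hp).2.2.2.2) _
  have hslice : ∀ (H : (Fin n → ℂ) × (Fin n → ℂ) → ℂ), AnalyticOnNhd ℂ H O → ∀ χ ∈ U,
      AnalyticOnNhd ℂ (fun z => H (z, χ)) U := fun H hH χ hχ z hz =>
    (hH _ (hUO z hz χ hχ)).comp (f := fun z : Fin n → ℂ => (z, χ))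
      (analyticAt_id.prod analyticAt_const)
  -- the matrix of class `𝒞`, as a function of `χ`
  set C : (Fin n → ℂ) → Matrix (Fin n) (Fin n) ℂ := fun χ => Matrix.of fun j k : Fin n =>
    fderiv ℂ (fun p : (Fin n → ℂ) × (Fin n → ℂ) => mpd (A j) (fun z => q z p.2) p.1) (0, χ)
      (0, Pi.single k 1) with hC
  have hCeq : ∀ χ ∈ U, (Matrix.of fun j k : Fin n =>
      pd k (fun χ' => mpd (A j) (fun z => q z χ') 0) χ) = C χ := by
    intro χ hχ
    ext j k
    exact fderiv_slice_right (X := fun p => mpd (A j) (fun z => q z p.2) p.1)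
      (hY j _ (hUO 0 hzero χ hχ)).differentiableAt _
  have hCc : ∀ χ ∈ U, ContinuousAt (fun χ => (C χ).det) χ := by
    intro χ hχ
    have : ContinuousAt C χ := by
      refine continuousAt_pi.2 fun j => continuousAt_pi.2 fun k => ?_
      have h1 := ((hY j _ (hUO 0 hzero χ hχ)).fderiv.apply_vector
        ((0 : Fin n → ℂ), (Pi.single k 1 : Fin n → ℂ))).continuousAt
      exact ContinuousAt.comp (f := fun χ : Fin n → ℂ => ((0 : Fin n → ℂ), χ)) h1 (by fun_prop)
    exact (continuous_id.matrix_det.continuousAt).comp this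
  have main : ∀ χ ∈ U, (C χ).det ≠ 0 → ∀ z ∈ U, F (z, χ) = 0 := by
    intro χ hχ hdetC
    obtain ⟨v, hv, hJv⟩ := Matrix.exists_mulVec_eq_zero_iff.2 (hball _ (hUO 0 hzero χ hχ)).2.2.2.1
    have hφχ := (hball _ (hUO 0 hzero χ hχ)).1.2
    have hDφ : fderiv ℂ φ χ v = 0 := by
      ext i
      have h1 := congrFun hJv i
      have h2 : ∀ j, pd j (fun χ' => φ χ' i) χ = fderiv ℂ φ χ (Pi.single j 1) i := by
        intro j
        have := (hasFDerivAt_pi'.1 hφχ.differentiableAt.hasFDerivAt i).fderiv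
        simp only [pd]
        rw [this]
        rfl
      simp only [Matrix.mulVec, dotProduct, Matrix.of_apply, h2, Pi.zero_apply] at h1
      rw [clm_apply_eq_sum_single]
      simpa [mul_comm] using h1
    have hprod : ∀ z ∈ U, F (z, χ) *
        fderiv ℂ (fun p : (Fin n → ℂ) × (Fin n → ℂ) => q p.1 p.2) (z, χ) (0, v) = 0 := by
      intro z hz
      have hb := hball _ (hUO z hz χ hχ)
      have hd1 : HasFDerivAt (fun p : (Fin n → ℂ) × (Fin n → ℂ) => φ p.2)
          ((fderiv ℂ φ χ).comp (ContinuousLinearMap.snd ℂ _ _)) (z, χ) :=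
        HasFDerivAt.comp (z, χ) (f := fun p : (Fin n → ℂ) × (Fin n → ℂ) => p.2)
          hφχ.differentiableAt.hasFDerivAt hasFDerivAt_snd
      have hd2 : HasFDerivAt G _ (z, χ) :=
        hasFDerivAt_fst.prodMk (hb.1.1.differentiableAt.hasFDerivAt.prodMk hd1)
      have hd3 := HasFDerivAt.comp (z, χ) hb.2.1.differentiableAt.hasFDerivAt hd2
      have hz' : (P ∘ G) =ᶠ[𝓝 (z, χ)] fun _ => 0 := by
        filter_upwards [hOo.mem_nhds (hUO z hz χ hχ)] with p hp using (hball p hp).2.2.1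
      have h4 := hd3.fderiv
      rw [hz'.fderiv_eq] at h4
      have h5 := DFunLike.congr_fun h4 ((0 : Fin n → ℂ), v)
      set c := fderiv ℂ (fun p : (Fin n → ℂ) × (Fin n → ℂ) => q p.1 p.2) (z, χ) (0, v)
      have h6 : fderiv ℂ P (G (z, χ)) (0, c, 0) = 0 := by
        simpa [hDφ] using h5.symm
      have h7 : ((0, c, 0) : (Fin n → ℂ) × ℂ × (Fin n → ℂ)) = c • (0, 1, 0) := by simp
      rw [h7, map_smul, smul_eq_mul] at h6
      rw [mul_comm]
      exact h6
    have hbU : AnalyticOnNhd ℂ (fun z =>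
        fderiv ℂ (fun p : (Fin n → ℂ) × (Fin n → ℂ) => q p.1 p.2) (z, χ) (0, v)) U :=
      hslice (fun p => fderiv ℂ (fun p : (Fin n → ℂ) × (Fin n → ℂ) => q p.1 p.2) p (0, v))
        (fun p hp => (hqO p hp).fderiv.apply_vector _) χ hχ
    refine (eqOn_zero_or_eqOn_zero_of_mul_eq_zero Metric.isOpen_ball
      (convex_ball 0 r).isPreconnected (hslice F hFa χ hχ) hbU hprod).resolve_right fun hb => ?_
    refine hdetC (Matrix.exists_mulVec_eq_zero_iff.1 ⟨v, hv, ?_⟩)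
    ext j
    have h1 := (RespectsParameters.mpd (A j) O hOo q hqO).2 χ v
      (fun z hz => hb z (hOU _ hz).1) 0 (hUO 0 hzero χ hχ)
    have h2 := clm_apply_eq_sum_single ((fderiv ℂ (fun p : (Fin n → ℂ) × (Fin n → ℂ) =>
      mpd (A j) (fun z => q z p.2) p.1) (0, χ)).comp (ContinuousLinearMap.inr ℂ _ _)) v
    simp only [ContinuousLinearMap.comp_apply, ContinuousLinearMap.inr_apply] at h2
    rw [h1] at h2
    simpa [Matrix.mulVec, dotProduct, hC, mul_comm] using h2.symm
  obtain ⟨χ₀, hχ₀, hne⟩ := ((not_eventually.1 hA).and_eventually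
    (Filter.eventually_mem_set.2 (Metric.ball_mem_nhds (0 : Fin n → ℂ) hr))).exists.imp
      fun χ h => And.symm h
  rw [hCeq χ₀ hχ₀] at hne
  have hFz : F =ᶠ[𝓝 ((0 : Fin n → ℂ), χ₀)] 0 := by
    have hc : ContinuousAt (fun p : (Fin n → ℂ) × (Fin n → ℂ) => p.2) (0, χ₀) := by fun_prop
    filter_upwards [hOo.mem_nhds (hUO 0 hzero χ₀ hχ₀),
      hc.eventually ((hCc χ₀ hχ₀).eventually_ne hne)] with p hp hp'
    exact main p.2 (hOU p hp).2 hp' p.1 (hOU p hp).1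
  filter_upwards [Metric.ball_mem_nhds (0 : (Fin n → ℂ) × (Fin n → ℂ)) hr] with p hp
  exact hFa.eqOn_zero_of_preconnected_of_eventuallyEq_zero (convex_ball _ r).isPreconnected
    (hUO 0 hzero χ₀ hχ₀) hFz hp

/-- The derivative `∂/∂w` of a function of `(z, w, ζ)`. -/
noncomputable def dw (P : (Fin n → ℂ) × ℂ × (Fin n → ℂ) → ℂ) :
    (Fin n → ℂ) × ℂ × (Fin n → ℂ) → ℂ :=
  fun p => fderiv ℂ P p (0, 1, 0)

lemma analyticAt_iterate_dw {P : (Fin n → ℂ) × ℂ × (Fin n → ℂ) → ℂ}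
    {p : (Fin n → ℂ) × ℂ × (Fin n → ℂ)} (hP : AnalyticAt ℂ P p) (k : ℕ) :
    AnalyticAt ℂ (dw^[k] P) p := by
  induction k with
  | zero => exact hP
  | succ k ih =>
    rw [Function.iterate_succ_apply']
    exact ih.fderiv.apply_vector _

lemma iteratedDeriv_eq_iterate_dw {P : (Fin n → ℂ) × ℂ × (Fin n → ℂ) → ℂ}
    {O : Set ((Fin n → ℂ) × ℂ × (Fin n → ℂ))} (hO : IsOpen O) (hP : AnalyticOnNhd ℂ P O)
    (z ζ : Fin n → ℂ) (k : ℕ) :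
    ∀ w, (z, w, ζ) ∈ O → iteratedDeriv k (fun w => P (z, w, ζ)) w = dw^[k] P (z, w, ζ) := by
  induction k with
  | zero => intro w _; simp
  | succ k ih =>
    intro w hw
    have hc : ContinuousAt (fun w : ℂ => (z, w, ζ)) w := by fun_prop
    have heq : iteratedDeriv k (fun w => P (z, w, ζ)) =ᶠ[𝓝 w] fun w => dw^[k] P (z, w, ζ) := by
      filter_upwards [hc.preimage_mem_nhds (hO.mem_nhds hw)] with w' hw' using ih w' hw'
    rw [iteratedDeriv_succ, heq.deriv_eq, Function.iterate_succ_apply']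
    have h1 : HasDerivAt (fun w : ℂ => (z, w, ζ)) ((0 : Fin n → ℂ), (1 : ℂ), (0 : Fin n → ℂ)) w :=
      (hasDerivAt_const w z).prodMk ((hasDerivAt_id w).prodMk (hasDerivAt_const w ζ))
    exact ((analyticAt_iterate_dw (hP _ hw) k).differentiableAt.hasFDerivAt.comp_hasDerivAt
      w h1).deriv

lemma eventually_eq_zero_of_iterate_dw {P : (Fin n → ℂ) × ℂ × (Fin n → ℂ) → ℂ}
    (hP : AnalyticAt ℂ P 0)
    (h : ∀ k, ∀ᶠ z in 𝓝 (0 : Fin n → ℂ), dw^[k] P (z, 0, 0) = 0) :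
    ∀ᶠ p in 𝓝 (0 : (Fin n → ℂ) × ℂ), P (p.1, p.2, 0) = 0 := by
  obtain ⟨r, hr, hball⟩ := Metric.eventually_nhds_iff_ball.1 hP.eventually_analyticAt
  have hmem : ∀ z ∈ Metric.ball (0 : Fin n → ℂ) r, ∀ w ∈ Metric.ball (0 : ℂ) r,
      (z, w, (0 : Fin n → ℂ)) ∈ Metric.ball (0 : (Fin n → ℂ) × ℂ × (Fin n → ℂ)) r := by
    intro z hz w hw
    simp only [mem_ball_zero_iff, Prod.norm_def, norm_zero] at hz hw ⊢
    simp [hz, hw]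
  have hw0 : (0 : ℂ) ∈ Metric.ball (0 : ℂ) r := Metric.mem_ball_self hr
  have hk : ∀ k, ∀ z ∈ Metric.ball (0 : Fin n → ℂ) r, dw^[k] P (z, 0, 0) = 0 := by
    intro k z hz
    have ha : AnalyticOnNhd ℂ (fun z : Fin n → ℂ => dw^[k] P (z, 0, 0))
        (Metric.ball 0 r) := fun z hz =>
      (analyticAt_iterate_dw (hball _ (hmem z hz 0 hw0)) k).comp
        (f := fun z : Fin n → ℂ => (z, (0 : ℂ), (0 : Fin n → ℂ)))
        (analyticAt_id.prod (analyticAt_const.prod analyticAt_const))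
    exact ha.eqOn_zero_of_preconnected_of_eventuallyEq_zero (convex_ball 0 r).isPreconnected
      (Metric.mem_ball_self hr) (h k) hz
  have hline : ∀ z ∈ Metric.ball (0 : Fin n → ℂ) r, ∀ w ∈ Metric.ball (0 : ℂ) r,
      P (z, w, 0) = 0 := by
    intro z hz w hw
    have ha : AnalyticOnNhd ℂ (fun w : ℂ => P (z, w, 0)) (Metric.ball 0 r) := fun w hw =>
      (hball _ (hmem z hz w hw)).comp (f := fun w : ℂ => (z, w, (0 : Fin n → ℂ)))
        (analyticAt_const.prod (analyticAt_id.prod analyticAt_const))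
    have htop : analyticOrderAt (fun w : ℂ => P (z, w, 0)) 0 = ⊤ := by
      refine ENat.eq_top_iff_forall_ge.2 fun m => ?_
      refine (natCast_le_analyticOrderAt_iff_iteratedDeriv_eq_zero (ha 0 hw0)).2 fun i _ => ?_
      rw [iteratedDeriv_eq_iterate_dw Metric.isOpen_ball hball z 0 i 0 (hmem z hz 0 hw0)]
      exact hk i z hz
    exact ha.eqOn_zero_of_preconnected_of_eventuallyEq_zero (convex_ball 0 r).isPreconnected
      hw0 (analyticOrderAt_eq_top.1 htop) hw
  filter_upwards [Metric.ball_mem_nhds (0 : (Fin n → ℂ) × ℂ) hr] with p hp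
  have hp' : p ∈ Metric.ball ((0 : Fin n → ℂ), (0 : ℂ)) r := hp
  rw [← ball_prod_same] at hp'
  exact hline _ hp'.1 _ hp'.2

lemma tendsto_zero_of_continuousAt {E F : Type*} [TopologicalSpace E] [Zero E]
    [TopologicalSpace F] [Zero F] {u : E → F} (h : ContinuousAt u 0) (h0 : u 0 = 0) :
    Tendsto u (𝓝 0) (𝓝 0) := by
  simpa only [h0] using h.tendsto

/-- For a Segre preserving map of class `𝒞` source, degeneracy of `χ ↦ f̃(χ,0)` forces `g ≡ 0`. -/
lemma eventually_eq_zero_of_det_jacz_eq_zero {Q Q' : (Fin n → ℂ) → (Fin n → ℂ) → ℂ → ℂ}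
    (hQ : IsNormalDF Q) (hQ' : IsNormalDF Q') (hM : ClassC Q)
    {f ft : (Fin n → ℂ) → ℂ → Fin n → ℂ} {g gt : (Fin n → ℂ) → ℂ → ℂ}
    (hH : IsHSPM Q Q' f g ft gt)
    (hdet : ∀ᶠ χ in 𝓝 (0 : Fin n → ℂ), (jacz ft χ).det = 0) :
    ∀ᶠ p in 𝓝 (0 : (Fin n → ℂ) × ℂ), g p.1 p.2 = 0 := by
  obtain ⟨hf, hg, hft, hgt, hf0, hg0, hft0, hgt0, hH⟩ := hH
  obtain ⟨hQa, hQn⟩ := hQ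
  obtain ⟨hQa', hQn'⟩ := hQ'
  obtain ⟨K, A, -, hA⟩ := hM
  have hQa0 := hQa.self_of_nhds
  have hQa0' := hQa'.self_of_nhds
  have hQ0 : Q 0 0 0 = 0 := hQn.self_of_nhds.1
  have hf' := hf.self_of_nhds
  have hg' := hg.self_of_nhds
  have hft' := hft.self_of_nhds
  have hgt' := hgt.self_of_nhds
  have hφ : AnalyticAt ℂ (fun χ => ft χ 0) 0 :=
    AnalyticAt.comp (f := fun χ : Fin n → ℂ => (χ, (0 : ℂ))) hft'
      (analyticAt_id.prod analyticAt_const)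
  have hγ : AnalyticAt ℂ (fun χ => gt χ 0) 0 :=
    AnalyticAt.comp (f := fun χ : Fin n → ℂ => (χ, (0 : ℂ))) hgt'
      (analyticAt_id.prod analyticAt_const)
  have hq : AnalyticAt ℂ (fun p : (Fin n → ℂ) × (Fin n → ℂ) => Q p.1 p.2 0) 0 :=
    AnalyticAt.comp (g := fun q : (Fin n → ℂ) × (Fin n → ℂ) × ℂ => Q q.1 q.2.1 q.2.2)
      (f := fun p : (Fin n → ℂ) × (Fin n → ℂ) => (p.1, p.2, (0 : ℂ))) hQa0
      (analyticAt_fst.prod (analyticAt_snd.prod analyticAt_const))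
  -- `g̃(χ, 0) = 0`
  have hgt_zero : ∀ᶠ χ in 𝓝 (0 : Fin n → ℂ), gt χ 0 = 0 := by
    have ht : Tendsto (fun χ : Fin n → ℂ => ((0 : Fin n → ℂ), χ, (0 : ℂ))) (𝓝 0) (𝓝 0) :=
      Continuous.tendsto' (by fun_prop) _ _ rfl
    have ht' : Tendsto (fun χ : Fin n → ℂ => ((0 : Fin n → ℂ), ft χ 0, gt χ 0)) (𝓝 0) (𝓝 0) :=
      tendsto_zero_of_continuousAt (analyticAt_const.prod (hφ.prod hγ)).continuousAt
        (Prod.ext rfl (Prod.ext hft0 hgt0))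
    filter_upwards [ht.eventually hH, ht.eventually hQn, ht'.eventually hQn'] with χ h1 h2 h3
    rw [h2.1, hg0, hf0, h3.1] at h1
    exact h1.symm
  set P : (Fin n → ℂ) × ℂ × (Fin n → ℂ) → ℂ :=
    fun p => g p.1 p.2.1 - Q' (f p.1 p.2.1) p.2.2 0 with hPdef
  have hP : AnalyticAt ℂ P 0 := by
    have h1 : AnalyticAt ℂ (fun p : (Fin n → ℂ) × ℂ × (Fin n → ℂ) => (p.1, p.2.1)) 0 :=
      analyticAt_fst.prod (analyticAt_fst.comp analyticAt_snd)
    have h2 : AnalyticAt ℂ (fun p : (Fin n → ℂ) × ℂ × (Fin n → ℂ) => f p.1 p.2.1) 0 :=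
      AnalyticAt.comp (g := fun q : (Fin n → ℂ) × ℂ => f q.1 q.2)
      (f := fun p : (Fin n → ℂ) × ℂ × (Fin n → ℂ) => (p.1, p.2.1)) hf' h1
    have h3 : AnalyticAt ℂ (fun p : (Fin n → ℂ) × ℂ × (Fin n → ℂ) => g p.1 p.2.1) 0 :=
      AnalyticAt.comp (g := fun q : (Fin n → ℂ) × ℂ => g q.1 q.2)
      (f := fun p : (Fin n → ℂ) × ℂ × (Fin n → ℂ) => (p.1, p.2.1)) hg' h1
    have h4 : AnalyticAt ℂ (fun p : (Fin n → ℂ) × ℂ × (Fin n → ℂ) =>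
        (f p.1 p.2.1, p.2.2, (0 : ℂ))) 0 :=
      h2.prod ((analyticAt_snd.comp analyticAt_snd).prod analyticAt_const)
    refine h3.sub (AnalyticAt.comp
      (g := fun q : (Fin n → ℂ) × (Fin n → ℂ) × ℂ => Q' q.1 q.2.1 q.2.2)
      (f := fun p : (Fin n → ℂ) × ℂ × (Fin n → ℂ) =>
        (f p.1 p.2.1, p.2.2, (0 : ℂ))) ?_ h4)
    simp only [Prod.fst_zero, Prod.snd_zero, hf0]
    exact hQa0'
  have hstep : ∀ k, ∀ᶠ p in 𝓝 (0 : (Fin n → ℂ) × (Fin n → ℂ)),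
      dw^[k] P (p.1, Q p.1 p.2 0, ft p.2 0) = 0 := by
    intro k
    induction k with
    | zero =>
      have ht : Tendsto (fun p : (Fin n → ℂ) × (Fin n → ℂ) => (p.1, p.2, (0 : ℂ))) (𝓝 0) (𝓝 0) :=
        Continuous.tendsto' (by fun_prop) _ _ rfl
      have ht' : Tendsto (fun p : (Fin n → ℂ) × (Fin n → ℂ) => p.2) (𝓝 0) (𝓝 0) :=
        continuous_snd.tendsto' _ _ rfl
      filter_upwards [ht.eventually hH, ht'.eventually hgt_zero] with p h1 h2
      rw [h2] at h1
      simp [hPdef, h1]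
    | succ k ih =>
      rw [Function.iterate_succ_apply']
      exact fderiv_eq_zero_along_of_degenerate (q := fun z χ => Q z χ 0)
        (φ := fun χ => ft χ 0) (analyticAt_iterate_dw hP k) hq hφ hQ0 hft0 A hA hdet ih
  have hk : ∀ k, ∀ᶠ z in 𝓝 (0 : Fin n → ℂ), dw^[k] P (z, 0, 0) = 0 := by
    intro k
    have ht : Tendsto (fun z : Fin n → ℂ => (z, (0 : Fin n → ℂ))) (𝓝 0) (𝓝 0) :=
      Continuous.tendsto' (by fun_prop) _ _ rfl
    have ht' : Tendsto (fun z : Fin n → ℂ => (z, (0 : Fin n → ℂ), (0 : ℂ))) (𝓝 0) (𝓝 0) :=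
      Continuous.tendsto' (by fun_prop) _ _ rfl
    filter_upwards [ht.eventually (hstep k), ht'.eventually hQn] with z h1 h2
    simpa [h2.2, hft0] using h1
  have hfz : Tendsto (fun p : (Fin n → ℂ) × ℂ => (f p.1 p.2, (0 : Fin n → ℂ), (0 : ℂ)))
      (𝓝 0) (𝓝 0) := by
    exact tendsto_zero_of_continuousAt (hf'.prod analyticAt_const).continuousAt
      (Prod.ext hf0 rfl)
  filter_upwards [eventually_eq_zero_of_iterate_dw hP hk, hfz.eventually hQn'] with p h1 h2
  simpa [hPdef, h2.2] using h1

/-- The conjugate `star ∘ f ∘ star` of an analytic function is analytic. -/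
lemma analyticAt_star_star {E : Type*} [NormedAddCommGroup E] [NormedSpace ℂ E]
    [StarAddMonoid E] [StarModule ℂ E] [NormedStarGroup E] {f : E → ℂ} {x : E}
    (hf : AnalyticAt ℂ f (star x)) : AnalyticAt ℂ (fun y => star (f (star y))) x := by
  obtain ⟨p, r, hp⟩ := hf
  let q : FormalMultilinearSeries ℂ E ℂ := fun k =>
    MultilinearMap.mkContinuous
      { toFun := fun m => star (p k fun i => star (m i))
        map_update_add' := fun m i x y => by
          simp only [← Function.comp_def star, Function.comp_update, star_add]
          rw [(p k).map_update_add, star_add]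
        map_update_smul' := fun m i c x => by
          simp only [← Function.comp_def star, Function.comp_update, star_smul]
          rw [(p k).map_update_smul, star_smul, star_star] }
      ‖p k‖ fun m => by
        simpa using (p k).le_opNorm fun i => star (m i)
  have hq : ∀ k, ‖q k‖ ≤ ‖p k‖ := fun k => MultilinearMap.mkContinuous_norm_le _ (norm_nonneg _) _
  refine ⟨q, r, ⟨hp.r_le.trans (FormalMultilinearSeries.radius_le_of_le hq), hp.r_pos, ?_⟩⟩
  intro y hy
  have hy' : star y ∈ Metric.eball (0 : E) r := by
    simpa [enorm_eq_nnnorm] using hy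
  have := (hp.hasSum hy').star
  simpa [q] using this

lemma pd_star_star (i : Fin n) (F : (Fin n → ℂ) → ℂ) :
    pd i (fun z => star (F (star z))) = fun z => star (pd i F (star z)) := by
  have hdiff : ∀ (F : (Fin n → ℂ) → ℂ) (z : Fin n → ℂ), DifferentiableAt ℂ F (star z) →
      HasFDerivAt (fun z => star (F (star z))) (((starL ℂ).toContinuousLinearMap.comp <|
        (fderiv ℂ F (star z)).comp (starL ℂ).toContinuousLinearMap)) z := by
    intro F z h
    have h1 := h.hasFDerivAt.star_star
    rw [star_star] at h1
    exact h1
  ext z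
  simp only [pd]
  have hs : star (Pi.single i 1 : Fin n → ℂ) = Pi.single i 1 := by
    ext j
    by_cases hj : j = i
    · subst hj; simp
    · simp [hj]
  by_cases h : DifferentiableAt ℂ F (star z)
  · rw [(hdiff F z h).fderiv]
    simp [hs]
  · have h' : ¬ DifferentiableAt ℂ (fun z => star (F (star z))) z := by
      intro h'
      refine h ?_
      have := (hdiff (fun z => star (F (star z))) (star z) (by simpa using h')).differentiableAt
      simpa using this
    rw [fderiv_zero_of_not_differentiableAt h, fderiv_zero_of_not_differentiableAt h']
    simp

lemma mpd_star_star (α : Fin n → ℕ) (F : (Fin n → ℂ) → ℂ) :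
    mpd α (fun z => star (F (star z))) = fun z => star (mpd α F (star z)) := by
  refine mpd_induction (p := fun D => ∀ F : (Fin n → ℂ) → ℂ,
    D (fun z => star (F (star z))) = fun z => star (D F (star z))) (fun _ => rfl) ?_
    pd_star_star α F
  intro D E hD hE F
  simp only [Function.comp_apply, hE, hD]

lemma QBar_apply (Q : (Fin n → ℂ) → (Fin n → ℂ) → ℂ → ℂ) (χ z : Fin n → ℂ) (τ : ℂ) :
    QBar Q χ z τ = star (Q (star χ) (star z) (star τ)) := rfl

lemma tendsto_star_zero {E : Type*} [NormedAddCommGroup E] [StarAddMonoid E]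
    [ContinuousStar E] : Tendsto (star : E → E) (𝓝 0) (𝓝 0) :=
  continuous_star.tendsto' _ _ (star_zero E)

lemma IsNormalDF.qBar {Q : (Fin n → ℂ) → (Fin n → ℂ) → ℂ → ℂ} (hQ : IsNormalDF Q) :
    IsNormalDF (QBar Q) := by
  refine ⟨?_, ?_⟩
  · filter_upwards [tendsto_star_zero.eventually hQ.1] with p hp
    exact analyticAt_star_star hp
  · filter_upwards [tendsto_star_zero.eventually hQ.2] with p hp
    simp only [Prod.fst_star, Prod.snd_star] at hp
    simp only [QBar_apply, star_zero, hp.1, hp.2, star_star, and_self]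

lemma ClassC.qBar {Q : (Fin n → ℂ) → (Fin n → ℂ) → ℂ → ℂ} (hQ : ClassC Q) :
    ClassC (QBar Q) := by
  obtain ⟨K, A, hK, hA⟩ := hQ
  refine ⟨K, A, hK, fun h => hA ?_⟩
  filter_upwards [tendsto_star_zero.eventually h] with χ hχ
  have key : ∀ j k, pd k (fun χ' => mpd (A j) (fun z => QBar Q z χ' 0) 0) (star χ) =
      star (pd k (fun χ' => mpd (A j) (fun z => Q z χ' 0) 0) χ) := by
    intro j k
    have h1 : ∀ χ', mpd (A j) (fun z => QBar Q z χ' 0) 0 =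
        star (mpd (A j) (fun z => Q z (star χ') 0) 0) := by
      intro χ'
      have := congrFun (mpd_star_star (A j) (fun z => Q z (star χ') 0)) 0
      simpa [QBar_apply] using this
    simp only [h1]
    have := congrFun (pd_star_star k (fun χ' => mpd (A j) (fun z => Q z χ' 0) 0)) (star χ)
    simpa using this
  simp only [key] at hχ
  have h2 := (RingHom.map_det (starRingEnd ℂ) (Matrix.of fun j k : Fin n =>
    pd k (fun χ' => mpd (A j) (fun z => Q z χ' 0) 0) χ))
  have h3 : (starRingEnd ℂ) (Matrix.of fun j k : Fin n =>
    pd k (fun χ' => mpd (A j) (fun z => Q z χ' 0) 0) χ).det = 0 := h2.trans hχ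
  simpa using h3

/-- The conjugate of a Segre preserving map. -/
lemma IsHSPM.qBar {Q Q' : (Fin n → ℂ) → (Fin n → ℂ) → ℂ → ℂ}
    (hQ : IsRealNormalDF Q) (hQ' : IsRealNormalDF Q')
    {f ft : (Fin n → ℂ) → ℂ → Fin n → ℂ} {g gt : (Fin n → ℂ) → ℂ → ℂ}
    (hH : IsHSPM Q Q' f g ft gt) : IsHSPM (QBar Q) (QBar Q') ft gt f g := by
  obtain ⟨hf, hg, hft, hgt, hf0, hg0, hft0, hgt0, hH⟩ := hH
  refine ⟨hft, hgt, hf, hg, hft0, hgt0, hf0, hg0, ?_⟩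
  have hQb0 : QBar Q 0 0 0 = 0 := hQ.1.qBar.2.self_of_nhds.1
  have ht1 : Tendsto (fun p : (Fin n → ℂ) × (Fin n → ℂ) × ℂ => (p.2.1, p.1, p.2.2))
      (𝓝 0) (𝓝 0) := Continuous.tendsto' (by fun_prop) _ _ rfl
  have hb : AnalyticAt ℂ (fun p : (Fin n → ℂ) × (Fin n → ℂ) × ℂ => QBar Q p.1 p.2.1 p.2.2) 0 :=
    hQ.1.qBar.1.self_of_nhds
  have ht2 : Tendsto (fun p : (Fin n → ℂ) × (Fin n → ℂ) × ℂ =>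
      (p.2.1, p.1, QBar Q p.1 p.2.1 p.2.2)) (𝓝 0) (𝓝 0) := by
    have h1 : ContinuousAt (fun p : (Fin n → ℂ) × (Fin n → ℂ) × ℂ =>
      (p.2.1, p.1, QBar Q p.1 p.2.1 p.2.2)) 0 :=
      ContinuousAt.prodMk (by fun_prop) (ContinuousAt.prodMk (by fun_prop) hb.continuousAt)
    exact tendsto_zero_of_continuousAt h1 (Prod.ext rfl (Prod.ext rfl hQb0))
  have ht3 : Tendsto (fun p : (Fin n → ℂ) × (Fin n → ℂ) × ℂ =>
      (p.1, QBar Q p.1 p.2.1 p.2.2)) (𝓝 0) (𝓝 0) := by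
    have h1 : ContinuousAt (fun p : (Fin n → ℂ) × (Fin n → ℂ) × ℂ =>
      (p.1, QBar Q p.1 p.2.1 p.2.2)) 0 :=
      ContinuousAt.prodMk (by fun_prop) hb.continuousAt
    exact tendsto_zero_of_continuousAt h1 (Prod.ext rfl hQb0)
  have ht4 : Tendsto (fun p : (Fin n → ℂ) × (Fin n → ℂ) × ℂ => (p.2.1, p.2.2)) (𝓝 0) (𝓝 0) :=
    Continuous.tendsto' (by fun_prop) _ _ rfl
  have hfc : Tendsto (fun p : (Fin n → ℂ) × ℂ => f p.1 p.2) (𝓝 0) (𝓝 0) := by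
    simpa [ContinuousAt, hf0] using hf.self_of_nhds.continuousAt
  have hftc : Tendsto (fun p : (Fin n → ℂ) × ℂ => ft p.1 p.2) (𝓝 0) (𝓝 0) := by
    simpa [ContinuousAt, hft0] using hft.self_of_nhds.continuousAt
  have hgtc : Tendsto (fun p : (Fin n → ℂ) × ℂ => gt p.1 p.2) (𝓝 0) (𝓝 0) := by
    simpa [ContinuousAt, hgt0] using hgt.self_of_nhds.continuousAt
  have ht5 := (tendsto_star_zero.comp (hftc.comp ht3)).prodMk_nhds
    ((tendsto_star_zero.comp (hfc.comp ht4)).prodMk_nhds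
      (tendsto_star_zero.comp (hgtc.comp ht3)))
  filter_upwards [ht1.eventually hQ.2, ht2.eventually hH, ht5.eventually hQ'.2] with p h1 h2 h3
  simp only [Function.comp_apply] at h1 h2 h3
  rw [h1] at h2
  simp only [QBar_apply Q', star_star] at h3
  rw [← h2] at h3
  rw [QBar_apply Q', h3, star_star]

/-- Lemma 2.3: if `M` is of class `𝒞` at `0`, then for an HSPM `ℋ`,
`g ≢ 0` implies `det f̃_χ(·,0) ≢ 0`, and `g̃ ≢ 0` implies `det f_z(·,0) ≢ 0`. -/
theorem statement8 (n : ℕ) (hn : 1 ≤ n)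
    (Q Q' : (Fin n → ℂ) → (Fin n → ℂ) → ℂ → ℂ)
    (hQ : IsRealNormalDF Q) (hQ' : IsRealNormalDF Q')
    (hM : ClassC Q)
    (f ft : (Fin n → ℂ) → ℂ → Fin n → ℂ) (g gt : (Fin n → ℂ) → ℂ → ℂ)
    (hH : IsHSPM Q Q' f g ft gt) :
    ((¬ ∀ᶠ p in 𝓝 (0 : (Fin n → ℂ) × ℂ), g p.1 p.2 = 0) →
      ¬ ∀ᶠ χ in 𝓝 (0 : Fin n → ℂ), (jacz ft χ).det = 0) ∧
    ((¬ ∀ᶠ p in 𝓝 (0 : (Fin n → ℂ) × ℂ), gt p.1 p.2 = 0) →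
      ¬ ∀ᶠ z in 𝓝 (0 : Fin n → ℂ), (jacz f z).det = 0) := by
  refine ⟨fun hg h => hg ?_, fun hg h => hg ?_⟩
  · exact eventually_eq_zero_of_det_jacz_eq_zero hQ.1 hQ'.1 hM hH h
  · exact eventually_eq_zero_of_det_jacz_eq_zero hQ.1.qBar hQ'.1.qBar hM.qBar (hH.qBar hQ hQ') h

end HSPMpaper
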